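/- Minimum upload cost of capacity achieving PIR_max (Corollary 5): for all integers N ≥ 2 and K ≥ 1: (i) every PIR_max scheme with K messages and N databases that has rate R = L_w/(N·L_x) = C_K(N) and in which every possible answer of every database belongs to some decoding set must have M_n ≥ N^{K−1} for every database n ∈ {1,…,N}; and (ii) there exists a capacity achieving PIR_max scheme with M_n = N^{K−1} for every n, in which the user selects a decoding set of the desired message uniformly at random among N^{K−1} decoding sets. Hence the minimum upload cost of a capacity achieving PIR_max scheme is (K−1)·log N bits per database. -/

import Mathlib

open scoped BigOperators

noncomputable section

/-- A finite probability space: a finite type together with a probability mass function. -/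
structure FinProbSpace where
  Ω : Type
  [fin : Fintype Ω]
  p : Ω → ℝ
  nonneg : ∀ ω, 0 ≤ p ω
  sum_one : ∑ ω, p ω = 1

attribute [instance] FinProbSpace.fin

namespace FinProbSpace

variable (P : FinProbSpace)

/-- Probability that the random variable `X` takes the value `a`. -/
def prob {α : Type} [DecidableEq α] (X : P.Ω → α) (a : α) : ℝ :=
  ∑ ω, if X ω = a then P.p ω else 0

/-- Shannon entropy (in bits) of a finitely valued random variable. -/
def H {α : Type} [Fintype α] [DecidableEq α] (X : P.Ω → α) : ℝ :=
  ∑ a, -(P.prob X a * Real.logb 2 (P.prob X a))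

/-- Conditional Shannon entropy `H(X | Y) = H(X, Y) - H(Y)` (in bits). -/
def condH {α β : Type} [Fintype α] [DecidableEq α] [Fintype β] [DecidableEq β]
    (X : P.Ω → α) (Y : P.Ω → β) : ℝ :=
  P.H (fun ω => (X ω, Y ω)) - P.H Y

/-- The tuple random variable `(X_i)_{i ∈ ι}`. -/
def tuple {ι V : Type} (X : ι → P.Ω → V) : P.Ω → ι → V := fun ω i => X i ω

/-- Joint (mutual) independence of a finite family of random variables. -/
def iIndep {ι V : Type} [Fintype ι] [DecidableEq ι] [DecidableEq V] (X : ι → P.Ω → V) : Prop :=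
  ∀ a : ι → V, P.prob (P.tuple X) a = ∏ i, P.prob (X i) (a i)

/-- `X` and `Y` contain the same information about everything beyond `Z`:
`H(X | Y, Z) = H(Y | X, Z) = 0`. -/
def sameInfo {α β γ : Type} [Fintype α] [DecidableEq α] [Fintype β] [DecidableEq β]
    [Fintype γ] [DecidableEq γ] (X : P.Ω → α) (Y : P.Ω → β) (Z : P.Ω → γ) : Prop :=
  P.condH X (fun ω => (Y ω, Z ω)) = 0 ∧ P.condH Y (fun ω => (X ω, Z ω)) = 0

end FinProbSpace

/-- A locally decodable code with `K` source symbols of entropy `Lw`, `M` coded symbols of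
entropy `Lx`, and locality `N`. -/
structure LDC (K N M : ℕ) (Lw Lx : ℝ) where
  P : FinProbSpace
  V : Type
  [fV : Fintype V]
  [dV : DecidableEq V]
  V' : Type
  [fV' : Fintype V']
  [dV' : DecidableEq V']
  /-- the source symbols -/
  W : Fin K → P.Ω → V
  /-- the coded symbols -/
  X : Fin M → P.Ω → V'
  indep : P.iIndep W
  HW : ∀ k, P.H (W k) = Lw
  coded_fn : ∀ m, ∃ f : (Fin K → V) → V', ∀ ω, X m ω = f (fun k => W k ω)
  HX : ∀ m, P.H (X m) = Lx
  /-- the decoding supersets -/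
  decSets : Fin K → Finset (Finset (Fin M))
  decSets_nonempty : ∀ k, (decSets k).Nonempty
  decSets_card : ∀ k, ∀ s ∈ decSets k, s.card = N
  decodes : ∀ k, ∀ s ∈ decSets k,
    P.condH (W k) (P.tuple fun i : {x // x ∈ s} => X i.1) = 0

attribute [instance] LDC.fV LDC.dV LDC.fV' LDC.dV'

/-- A universal LDC: every coded symbol appears in some decoding set of every source symbol. -/
def LDC.IsUniversal {K N M : ℕ} {Lw Lx : ℝ} (C : LDC K N M Lw Lx) : Prop :=
  ∀ (m : Fin M) (k : Fin K), ∃ s ∈ C.decSets k, m ∈ s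

/-- A perfectly smooth LDC: for each source symbol, every coded symbol lies in the same
number of decoding sets. -/
def LDC.IsSmooth {K N M : ℕ} {Lw Lx : ℝ} (C : LDC K N M Lw Lx) : Prop :=
  ∀ (k : Fin K) (m m' : Fin M),
    ((C.decSets k).filter (fun s => m ∈ s)).card =
      ((C.decSets k).filter (fun s => m' ∈ s)).card

/-- `C*(N, K) = N (1 + 1/N + ⋯ + 1/N^{K-1})⁻¹`. -/
def Cstar (N K : ℕ) : ℝ := N / (∑ j ∈ Finset.range K, (1 / (N : ℝ)) ^ j)

/-- An `N`-query information retrieval scheme with `K` messages of entropy `Lw` and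
answer sets of sizes `Mn n` with answers of entropy `Lx`. -/
structure IRScheme (K N : ℕ) (Mn : Fin N → ℕ) (Lw Lx : ℝ) where
  P : FinProbSpace
  V : Type
  [fV : Fintype V]
  [dV : DecidableEq V]
  V' : Type
  [fV' : Fintype V']
  [dV' : DecidableEq V']
  /-- the messages -/
  W : Fin K → P.Ω → V
  /-- `A n m` is the `m`-th possible answer of database `n` -/
  A : (n : Fin N) → Fin (Mn n) → P.Ω → V'
  indep : P.iIndep W
  HW : ∀ k, P.H (W k) = Lw
  ans_fn : ∀ n m, ∃ f : (Fin K → V) → V', ∀ ω, A n m ω = f (fun k => W k ω)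
  HA : ∀ n m, P.H (A n m) = Lx
  /-- the decoding supersets: each decoding set consists of one answer index per database -/
  Q : Fin K → Finset ((n : Fin N) → Fin (Mn n))
  Q_nonempty : ∀ k, (Q k).Nonempty
  decodes : ∀ k, ∀ q ∈ Q k, P.condH (W k) (P.tuple fun n => A n (q n)) = 0

attribute [instance] IRScheme.fV IRScheme.dV IRScheme.fV' IRScheme.dV'

/-- A repudiative (RIR_max) scheme: every possible answer of every database appears in some
decoding set of every message. -/
def IRScheme.IsRIR {K N : ℕ} {Mn : Fin N → ℕ} {Lw Lx : ℝ} (C : IRScheme K N Mn Lw Lx) : Prop :=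
  ∀ (n : Fin N) (m : Fin (Mn n)) (k : Fin K), ∃ q ∈ C.Q k, q n = m

/-- A perfectly private (PIR_max) scheme: for each message there is a distribution on its
decoding sets such that the marginal distribution of the query to each database does not
depend on the message. -/
def IRScheme.IsPIR {K N : ℕ} {Mn : Fin N → ℕ} {Lw Lx : ℝ} (C : IRScheme K N Mn Lw Lx) : Prop :=
  ∃ μ : Fin K → ((n : Fin N) → Fin (Mn n)) → ℝ,
    (∀ k q, 0 ≤ μ k q) ∧ (∀ k, ∑ q ∈ C.Q k, μ k q = 1) ∧
    (∀ (k k' : Fin K) (n : Fin N) (m : Fin (Mn n)),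
      ∑ q ∈ (C.Q k).filter (fun q => q n = m), μ k q =
        ∑ q ∈ (C.Q k').filter (fun q => q n = m), μ k' q)

/-- `C_K(N) = (1 + 1/N + ⋯ + 1/N^{K-1})⁻¹`, the capacity of PIR. -/
def CK (N K : ℕ) : ℝ := (∑ j ∈ Finset.range K, (1 / (N : ℝ)) ^ j)⁻¹

/-! Lower bound. When the capacity is attained, all Shannon inequalities of the converse are tight,
so the entropy of an answer given the messages of a set `s` depends only on `|s|`. Counting entropy
in a decoding set of message `k` then shows that its `N` answers carry the same information given
`s` if `k ∈ s`, while no two of them do if `k ∉ s`. Hence each class of answers equivalent given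
`s ∪ {k}` contains at least `N` classes of answers equivalent given `s`, so that there are at least
`N ^ (K - 1)` classes given a single message, and every one of them is met by every database.

Construction. Index the answers by the points of `(ℤ/N)^K`, the coordinate sum being the database,
and let the decoding sets of message `k` be the lines in direction `k`: an answer is a sum of one
bit of each message, the bit in position `0` being zero. This code (of Tian, Sun and Chen) has a
null answer; concatenating its translates by all shifts of the index makes each answer vanish in
exactly one block, so that all answers have the same entropy. -/

section Polymatroidal

variable {α ι : Type*} [SemilatticeInf α]

/-- The value of `x` conditioned on `w`. If `h` is entropy then this is `H(x | w)`, the meet `x ⊓ w`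
standing for the pair `(x, w)`. -/
def condRank (h : α → ℝ) (x w : α) : ℝ := h (x ⊓ w) - h w

/-- `z` determines `x` up to null events: if `h` is entropy then this is `H(x | z) = 0`. -/
def Determines (h : α → ℝ) (z x : α) : Prop := h (x ⊓ z) = h z

variable {h : α → ℝ} {x y z z' : α}

theorem Determines.of_le (hzx : z ≤ x) : Determines h z x := congrArg h (inf_eq_right.2 hzx)

variable [OrderTop α]

/-- The Shannon inequalities for a function on a meet semilattice of pieces of information.
Smaller elements carry more information, `a ⊓ b` is joint information and `⊤` is no information.
Joins are not required, so submodularity refers to an arbitrary common upper bound. -/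
structure IsPolymatroidal (h : α → ℝ) : Prop where
  antitone : Antitone h
  submodular : ∀ ⦃a b c : α⦄, a ≤ c → b ≤ c → h (a ⊓ b) + h c ≤ h a + h b
  map_top : h ⊤ = 0

namespace IsPolymatroidal

theorem condRank_anti_left (hh : IsPolymatroidal h) (hxy : x ≤ y) (w : α) :
    condRank h y w ≤ condRank h x w :=
  sub_le_sub_right (hh.antitone (inf_le_inf_right w hxy)) _

theorem condRank_inf_le_sum (hh : IsPolymatroidal h) (t : Finset ι) (f : ι → α) (w : α) :
    condRank h (t.inf f) w ≤ ∑ i ∈ t, condRank h (f i) w := by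
  classical
  induction t using Finset.induction_on with
  | empty => simp [condRank]
  | insert i t hi ih =>
    have hsub := hh.submodular (a := f i ⊓ w) (b := t.inf f ⊓ w) inf_le_right inf_le_right
    rw [← inf_inf_distrib_right] at hsub
    rw [Finset.sum_insert hi, Finset.inf_insert]
    unfold condRank at ih ⊢
    linarith

theorem map_inf_le_sum (hh : IsPolymatroidal h) (t : Finset ι) (f : ι → α) :
    h (t.inf f) ≤ ∑ i ∈ t, h (f i) := by
  simpa [condRank, hh.map_top] using hh.condRank_inf_le_sum t f ⊤

theorem map_inf_eq_sum_of_univ [Fintype ι] (hh : IsPolymatroidal h) {f : ι → α}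
    (huniv : h (Finset.univ.inf f) = ∑ i, h (f i)) (s : Finset ι) :
    h (s.inf f) = ∑ i ∈ s, h (f i) := by
  classical
  refine le_antisymm (hh.map_inf_le_sum s f) ?_
  have hsub := hh.submodular (a := s.inf f) (b := sᶜ.inf f) le_top le_top
  rw [← Finset.inf_union, Finset.union_compl, huniv, hh.map_top, ← Finset.sum_add_sum_compl s]
    at hsub
  linarith [hh.map_inf_le_sum sᶜ f]

end IsPolymatroidal

namespace Determines

theorem of_map_le (hh : IsPolymatroidal h) (hyx : y ≤ x) (hyz : y ≤ z) (hle : h y ≤ h z) :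
    Determines h z x :=
  ((hh.antitone (le_inf hyx hyz)).trans hle).antisymm (hh.antitone inf_le_right)

theorem mono (hh : IsPolymatroidal h) (hd : Determines h z x) (hz : z' ≤ z) :
    Determines h z' x := by
  have hsub := hh.submodular (a := x ⊓ z) (b := z') inf_le_right hz
  rw [inf_assoc, inf_eq_right.2 hz, hd] at hsub
  exact (by linarith : h (x ⊓ z') ≤ h z').antisymm (hh.antitone inf_le_right)

theorem trans (hh : IsPolymatroidal h) (hy : Determines h z y) (hx : Determines h (y ⊓ z) x) :
    Determines h z x :=
  of_map_le hh inf_le_left (inf_le_right.trans inf_le_right) (Eq.trans hx hy).le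

end Determines

end Polymatroidal

/-- The messages and answers of a retrieval scheme with rate at least `C_K(N)`, as elements of a
semilattice of pieces of information on which `h` plays the part of entropy. -/
structure TightSystem {α : Type*} [SemilatticeInf α] [OrderTop α] (h : α → ℝ) (K N : ℕ)
    (I : Type*) where
  polymatroidal : IsPolymatroidal h
  msg : Fin K → α
  ans : I → α
  /-- the database that gives an answer -/
  db : I → Fin N
  /-- the entropy of a message -/
  L : ℝ
  L_pos : 0 < L
  map_inf_msg : ∀ s : Finset (Fin K), h (s.inf msg) = s.card * L
  map_ans_le : ∀ i, h (ans i) ≤ L / N * ∑ t ∈ Finset.range K, (1 / (N : ℝ)) ^ t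
  determines_ans : ∀ i, Determines h (Finset.univ.inf msg) (ans i)
  /-- every answer belongs to a decoding set of every message -/
  exists_decodes : ∀ k i, ∃ q : Fin N → I, (∀ n, db (q n) = n) ∧ q (db i) = i ∧
    Determines h (Finset.univ.inf (ans ∘ q)) (msg k)

namespace TightSystem

variable {α I : Type*} [SemilatticeInf α] [OrderTop α] {h : α → ℝ} {K N : ℕ}
  (T : TightSystem h K N I) {s : Finset (Fin K)} {i j : I} {k : Fin K} {q : Fin N → I}

/-- The joint information of the messages indexed by `s`. -/
def msgs (s : Finset (Fin K)) : α := s.inf T.msg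

/-- The joint information of a family of answers, one from each database. -/
def answers (q : Fin N → I) : α := Finset.univ.inf (T.ans ∘ q)

/-- The entropy that an answer turns out to have once `j` messages are known. -/
def level (j : ℕ) : ℝ := T.L / N * ∑ t ∈ Finset.range (K - j), (1 / (N : ℝ)) ^ t

theorem level_add_one [NeZero N] {j : ℕ} (hj : j < K) :
    T.level (j + 1) = N * T.level j - T.L := by
  obtain ⟨d, rfl⟩ := Nat.exists_eq_add_of_lt hj
  have hd : j + d + 1 - j = d + 1 := by omega
  have hd' : j + d + 1 - (j + 1) = d := by omega
  have hN : (N : ℝ) ≠ 0 := NeZero.ne _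
  simp only [level, hd, hd', Finset.sum_range_succ', pow_succ, ← Finset.sum_mul]
  field_simp
  ring

theorem level_pos [NeZero N] {j : ℕ} (hj : j < K) : 0 < T.level j := by
  have hN : (0 : ℝ) < N := Nat.cast_pos.2 (NeZero.pos N)
  exact mul_pos (div_pos T.L_pos hN) (Finset.sum_pos (fun _ _ => by positivity)
    (Finset.nonempty_range_iff.2 (Nat.sub_ne_zero_of_lt hj)))

theorem card_lt_of_notMem (hk : k ∉ s) : s.card < K := by
  simpa using Finset.card_lt_univ_of_notMem hk

theorem answers_le (q : Fin N → I) (n : Fin N) : T.answers q ≤ T.ans (q n) :=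
  Finset.inf_le (f := T.ans ∘ q) (Finset.mem_univ n)

/-- Decoding `k` turns the `L` bits of that message into side information. -/
theorem condRank_answers_insert (hq : Determines h (T.answers q) (T.msg k)) (hk : k ∉ s) :
    condRank h (T.answers q) (T.msgs (insert k s)) =
      condRank h (T.answers q) (T.msgs s) - T.L := by
  have hdet : Determines h (T.answers q ⊓ T.msgs s) (T.msg k) := hq.mono T.polymatroidal inf_le_left
  have hmeet : T.answers q ⊓ T.msgs (insert k s) = T.msg k ⊓ (T.answers q ⊓ T.msgs s) := by
    rw [msgs, Finset.inf_insert, inf_left_comm, msgs]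
  rw [condRank, condRank, hmeet, hdet, msgs, msgs, T.map_inf_msg, T.map_inf_msg,
    Finset.card_insert_of_notMem hk]
  push_cast
  ring

theorem condRank_answers_insert_le (hq : Determines h (T.answers q) (T.msg k)) (hk : k ∉ s) :
    condRank h (T.answers q) (T.msgs (insert k s)) ≤
      ∑ m, condRank h (T.ans (q m)) (T.msgs s) - T.L :=
  (T.condRank_answers_insert hq hk).trans_le
    (sub_le_sub_right (T.polymatroidal.condRank_inf_le_sum _ _ _) _)

theorem condRank_ans_insert_le (hq : Determines h (T.answers q) (T.msg k)) (hk : k ∉ s)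
    (n : Fin N) :
    condRank h (T.ans (q n)) (T.msgs (insert k s)) ≤
      ∑ m, condRank h (T.ans (q m)) (T.msgs s) - T.L :=
  (T.polymatroidal.condRank_anti_left (T.answers_le q n) _).trans
    (T.condRank_answers_insert_le hq hk)

theorem condRank_ans_le_level [NeZero N] (s : Finset (Fin K)) (i : I) :
    condRank h (T.ans i) (T.msgs s) ≤ T.level s.card := by
  induction s using Finset.induction_on generalizing i with
  | empty => simpa [condRank, msgs, level, T.polymatroidal.map_top] using T.map_ans_le i
  | insert k s hk ih =>
    obtain ⟨q, -, hqi, hq⟩ := T.exists_decodes k i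
    rw [Finset.card_insert_of_notMem hk, T.level_add_one (card_lt_of_notMem hk), ← hqi]
    calc condRank h (T.ans (q (T.db i))) (T.msgs (insert k s))
        ≤ ∑ m, condRank h (T.ans (q m)) (T.msgs s) - T.L := T.condRank_ans_insert_le hq hk _
      _ ≤ ∑ _m : Fin N, T.level s.card - T.L :=
          sub_le_sub_right (Finset.sum_le_sum fun m _ => ih (q m)) _
      _ = N * T.level s.card - T.L := by simp

theorem level_le_condRank_ans [NeZero N] (s : Finset (Fin K)) (i : I) :
    T.level s.card ≤ condRank h (T.ans i) (T.msgs s) := by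
  induction hd : K - s.card generalizing s i with
  | zero =>
    have hs : s = Finset.univ := by
      rw [← Finset.card_eq_iff_eq_univ, Fintype.card_fin]
      exact (card_finset_fin_le s).antisymm (Nat.sub_eq_zero_iff_le.1 hd)
    rw [level, hd, hs, condRank, msgs, T.determines_ans i, sub_self]
    simp
  | succ d ih =>
    obtain ⟨k, hk⟩ : ∃ k, k ∉ s := by
      by_contra! h
      simp [Finset.eq_univ_iff_forall.2 h] at hd
    obtain ⟨q, -, hqi, hq⟩ := T.exists_decodes k i
    have hlower : T.level (s.card + 1) ≤ ∑ m, condRank h (T.ans (q m)) (T.msgs s) - T.L := by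
      rw [← Finset.card_insert_of_notMem hk]
      refine (ih (insert k s) (q (T.db i)) ?_).trans (T.condRank_ans_insert_le hq hk _)
      rw [Finset.card_insert_of_notMem hk]
      omega
    have hothers : ∑ m ∈ Finset.univ.erase (T.db i), condRank h (T.ans (q m)) (T.msgs s) ≤
        (N - 1) * T.level s.card := by
      refine (Finset.sum_le_card_nsmul _ _ _ fun m _ => T.condRank_ans_le_level s (q m)).trans ?_
      simp [NeZero.one_le]
    rw [T.level_add_one (card_lt_of_notMem hk), ← Finset.add_sum_erase _ _ (Finset.mem_univ
      (T.db i)), hqi] at hlower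
    linarith

theorem condRank_ans [NeZero N] (s : Finset (Fin K)) (i : I) :
    condRank h (T.ans i) (T.msgs s) = T.level s.card :=
  (T.condRank_ans_le_level s i).antisymm (T.level_le_condRank_ans s i)

/-- Given the messages indexed by `s`, two answers carry the same information. -/
def sameInfo (s : Finset (Fin K)) : Setoid I where
  r i j := Determines h (T.ans i ⊓ T.msgs s) (T.ans j) ∧ Determines h (T.ans j ⊓ T.msgs s) (T.ans i)
  iseqv := by
    have htrans (i j l : I) (hij : Determines h (T.ans i ⊓ T.msgs s) (T.ans j))
        (hjl : Determines h (T.ans j ⊓ T.msgs s) (T.ans l)) :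
        Determines h (T.ans i ⊓ T.msgs s) (T.ans l) :=
      hij.trans T.polymatroidal (hjl.mono T.polymatroidal (inf_le_inf_left _ inf_le_right))
    exact ⟨fun i => ⟨.of_le inf_le_left, .of_le inf_le_left⟩, And.symm,
      fun hij hjl => ⟨htrans _ _ _ hij.1 hjl.1, htrans _ _ _ hjl.2 hij.2⟩⟩

theorem sameInfo_mono : Monotone T.sameInfo := fun s t hst _ _ hij =>
  have hmono (i : I) : T.ans i ⊓ T.msgs t ≤ T.ans i ⊓ T.msgs s :=
    inf_le_inf_left _ (Finset.inf_mono hst)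
  ⟨hij.1.mono T.polymatroidal (hmono _), hij.2.mono T.polymatroidal (hmono _)⟩

theorem sameInfo_of_decodes [NeZero N] (hq : Determines h (T.answers q) (T.msg k)) (hk : k ∈ s)
    (m n : Fin N) : T.sameInfo s (q m) (q n) := by
  suffices hdet : ∀ m n, Determines h (T.ans (q m) ⊓ T.msgs s) (T.ans (q n)) from
    ⟨hdet m n, hdet n m⟩
  intro m n
  obtain ⟨s, hks, rfl⟩ : ∃ t, k ∉ t ∧ insert k t = s :=
    ⟨s.erase k, Finset.notMem_erase k s, Finset.insert_erase hk⟩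
  have hle : condRank h (T.answers q) (T.msgs (insert k s)) ≤
      condRank h (T.ans (q m)) (T.msgs (insert k s)) := by
    refine (T.condRank_answers_insert_le hq hks).trans_eq ?_
    simp [T.condRank_ans, Finset.card_insert_of_notMem hks,
      T.level_add_one (card_lt_of_notMem hks)]
  exact .of_map_le T.polymatroidal (inf_le_left.trans (T.answers_le q n))
    (inf_le_inf_right _ (T.answers_le q m)) ((sub_le_sub_iff_right _).1 hle)

/-- If two of the answers were equivalent given `s`, the other `N - 1` would carry all the
information, which is too little for decoding `k ∉ s`. -/
theorem eq_of_decodes_of_sameInfo [NeZero N] (hq : Determines h (T.answers q) (T.msg k))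
    (hk : k ∉ s) {m n : Fin N} (hmn : T.sameInfo s (q m) (q n)) : m = n := by
  by_contra hne
  have hinsert : T.answers q = T.ans (q n) ⊓ (Finset.univ.erase n).inf (T.ans ∘ q) := by
    rw [answers, ← Finset.insert_erase (Finset.mem_univ n), Finset.inf_insert,
      Finset.insert_erase (Finset.mem_univ n), Function.comp_apply]
  have hredundant : condRank h (T.answers q) (T.msgs s) =
      condRank h ((Finset.univ.erase n).inf (T.ans ∘ q)) (T.msgs s) := by
    have hle : (Finset.univ.erase n).inf (T.ans ∘ q) ≤ T.ans (q m) :=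
      Finset.inf_le (f := T.ans ∘ q) (Finset.mem_erase.2 ⟨hne, Finset.mem_univ m⟩)
    rw [condRank, condRank, hinsert, inf_assoc,
      hmn.1.mono T.polymatroidal (inf_le_inf_right _ hle)]
  have hlt := card_lt_of_notMem hk
  have hle : T.level (s.card + 1) ≤ (N - 1) * T.level s.card - T.L :=
    calc T.level (s.card + 1)
        = condRank h (T.ans (q n)) (T.msgs (insert k s)) := by
          rw [T.condRank_ans, Finset.card_insert_of_notMem hk]
      _ ≤ condRank h (T.answers q) (T.msgs (insert k s)) :=
          T.polymatroidal.condRank_anti_left (T.answers_le q n) _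
      _ = condRank h ((Finset.univ.erase n).inf (T.ans ∘ q)) (T.msgs s) - T.L := by
          rw [T.condRank_answers_insert hq hk, hredundant]
      _ ≤ ∑ m ∈ Finset.univ.erase n, condRank h (T.ans (q m)) (T.msgs s) - T.L :=
          sub_le_sub_right (T.polymatroidal.condRank_inf_le_sum _ _ _) _
      _ = (N - 1) * T.level s.card - T.L := by simp [T.condRank_ans, NeZero.one_le]
  linarith [T.level_add_one hlt, T.level_pos hlt]

/-- Decoding `k` from an answer `i` sorts the answers equivalent to `i` given `s` and `k` into `N`
classes that are distinct given `s` alone. -/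
theorem card_quotient_mul_le [NeZero N] [Finite I] (hk : k ∉ s) :
    Nat.card (Quotient (T.sameInfo (insert k s))) * N ≤ Nat.card (Quotient (T.sameInfo s)) := by
  choose q _ hqi hq using T.exists_decodes k
  have hsame (i : I) (n : Fin N) : T.sameInfo (insert k s) (q i n) i := by
    simpa only [hqi] using T.sameInfo_of_decodes (hq i) (Finset.mem_insert_self k s) n (T.db i)
  let split (x : Quotient (T.sameInfo (insert k s)) × Fin N) : Quotient (T.sameInfo s) :=
    Quotient.mk _ (q x.1.out x.2)
  have hsplit : Function.Injective split := by
    rintro ⟨c, n⟩ ⟨c', n'⟩ hcc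
    have hrel : T.sameInfo s (q c.out n) (q c'.out n') := Quotient.exact hcc
    obtain rfl : c = c' := by
      rw [← Quotient.out_equiv_out]
      have hrel' := T.sameInfo_mono (Finset.subset_insert k s) hrel
      exact Setoid.trans' _ (Setoid.trans' _ (Setoid.symm' _ (hsame _ n)) hrel') (hsame _ n')
    rw [T.eq_of_decodes_of_sameInfo (hq _) hk hrel]
  simpa using Nat.card_le_card_of_injective split hsplit

theorem pow_le_card_quotient [NeZero N] [Finite I] [Nonempty I] (s : Finset (Fin K)) :
    N ^ (K - s.card) ≤ Nat.card (Quotient (T.sameInfo s)) := by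
  induction hd : K - s.card generalizing s with
  | zero =>
    have : Nonempty (Quotient (T.sameInfo s)) := ‹Nonempty I›.map (Quotient.mk _)
    exact Nat.card_pos
  | succ d ih =>
    obtain ⟨k, hk⟩ : ∃ k, k ∉ s := by
      by_contra! h
      simp [Finset.eq_univ_iff_forall.2 h] at hd
    have hcard : K - (insert k s).card = d := by
      rw [Finset.card_insert_of_notMem hk]
      omega
    exact (Nat.mul_le_mul_right N (ih _ hcard)).trans (T.card_quotient_mul_le hk)

theorem pow_le_card_db [NeZero N] [NeZero K] [Finite I] [Nonempty I] (n : Fin N) :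
    N ^ (K - 1) ≤ Nat.card {i // T.db i = n} := by
  let cls (i : {i // T.db i = n}) : Quotient (T.sameInfo {0}) := Quotient.mk _ i.1
  have hcls : Function.Surjective cls := by
    refine Quotient.ind fun i => ?_
    obtain ⟨q, hdb, hqi, hq⟩ := T.exists_decodes 0 i
    refine ⟨⟨q n, hdb n⟩, Quotient.sound ?_⟩
    simpa only [hqi] using T.sameInfo_of_decodes hq (Finset.mem_singleton_self 0) n (T.db i)
  simpa using (T.pow_le_card_quotient {0}).trans (Nat.card_le_card_of_surjective cls hcls)

end TightSystem

namespace FinProbSpace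

section Entropy

variable (P : FinProbSpace)

open Classical in
/-- Probability of the class of `ω` in the partition of the sample space given by `s`. -/
def cell (s : Setoid P.Ω) (ω : P.Ω) : ℝ := ∑ ω' with s ω ω', P.p ω'

/-- Shannon entropy (in bits) of the partition of the sample space given by `s`. The entropy of a
random variable `X` is that of the partition `Setoid.ker X`. -/
def ent (s : Setoid P.Ω) : ℝ := -∑ ω, P.p ω * Real.logb 2 (P.cell s ω)

theorem cell_nonneg (s : Setoid P.Ω) (ω : P.Ω) : 0 ≤ P.cell s ω :=
  Finset.sum_nonneg fun ω' _ => P.nonneg ω'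

theorem cell_pos (s : Setoid P.Ω) {ω : P.Ω} (hω : 0 < P.p ω) : 0 < P.cell s ω :=
  hω.trans_le (Finset.single_le_sum (fun ω' _ => P.nonneg ω') (by simp))

theorem cell_mono {s t : Setoid P.Ω} (hst : s ≤ t) (ω : P.Ω) : P.cell s ω ≤ P.cell t ω := by
  classical
  exact Finset.sum_le_sum_of_subset_of_nonneg
    (Finset.monotone_filter_right _ fun _ _ hω => hst hω) fun ω' _ _ => P.nonneg ω'

theorem cell_congr (s : Setoid P.Ω) {ω ω' : P.Ω} (hs : s ω ω') : P.cell s ω = P.cell s ω' := by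
  classical
  have hiff (x : P.Ω) : s ω x ↔ s ω' x := ⟨s.trans' (s.symm' hs), s.trans' hs⟩
  exact Finset.sum_congr (Finset.filter_congr fun x _ => hiff x) fun _ _ => rfl

theorem cell_top (ω : P.Ω) : P.cell ⊤ ω = 1 := by
  simp [cell, Setoid.top_def, P.sum_one]

theorem sum_div_cell_le_one {s : Setoid P.Ω} {A : Finset P.Ω}
    (hA : ∀ x ∈ A, ∀ y ∈ A, s x y) : ∑ ω ∈ A, P.p ω / P.cell s ω ≤ 1 := by
  classical
  rcases A.eq_empty_or_nonempty with rfl | ⟨x, hx⟩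
  · simp
  calc ∑ ω ∈ A, P.p ω / P.cell s ω
      = (∑ ω ∈ A, P.p ω) / P.cell s x := by
        rw [Finset.sum_div]
        exact Finset.sum_congr rfl fun ω hω => by rw [P.cell_congr s (hA x hx ω hω)]
    _ ≤ P.cell s x / P.cell s x := by
        refine div_le_div_of_nonneg_right (Finset.sum_le_sum_of_subset_of_nonneg ?_
          fun ω _ _ => P.nonneg ω) (P.cell_nonneg s x)
        exact fun ω hω => by simpa using hA x hx ω hω
    _ ≤ 1 := div_self_le_one _

open Classical in
theorem sum_cell_div_cell_inf_le {a b c : Setoid P.Ω} (ha : a ≤ c) (hb : b ≤ c) (x : P.Ω) :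
    ∑ ω with b x ω, P.p ω * P.cell a ω / P.cell (a ⊓ b) ω ≤ P.cell c x :=
  calc ∑ ω with b x ω, P.p ω * P.cell a ω / P.cell (a ⊓ b) ω
      = ∑ ω with b x ω, ∑ y with a ω y, P.p y * (P.p ω / P.cell (a ⊓ b) ω) := by
        refine Finset.sum_congr rfl fun ω _ => ?_
        rw [← Finset.sum_mul, ← cell, mul_div_assoc', mul_comm (P.p ω)]
    _ = ∑ y with c x y, P.p y * ∑ ω with b x ω ∧ a ω y, P.p ω / P.cell (a ⊓ b) ω := by
        simp_rw [Finset.mul_sum]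
        refine Finset.sum_comm' fun ω y => ?_
        simp only [Finset.mem_filter_univ]
        exact ⟨fun hωy => ⟨hωy, c.trans' (hb hωy.1) (ha hωy.2)⟩, And.left⟩
    _ ≤ ∑ y with c x y, P.p y := by
        refine Finset.sum_le_sum fun y _ => mul_le_of_le_one_right (P.nonneg y)
          (P.sum_div_cell_le_one fun ω hω ω' hω' => ?_)
        rw [Finset.mem_filter_univ] at hω hω'
        exact ⟨a.trans' hω.2 (a.symm' hω'.2), b.trans' (b.symm' hω.1) hω'.1⟩
    _ = P.cell c x := rfl

theorem sum_cell_mul_cell_div_le_one {a b c : Setoid P.Ω} (ha : a ≤ c) (hb : b ≤ c) :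
    ∑ ω, P.p ω * (P.cell a ω * P.cell b ω / (P.cell c ω * P.cell (a ⊓ b) ω)) ≤ 1 := by
  classical
  calc ∑ ω, P.p ω * (P.cell a ω * P.cell b ω / (P.cell c ω * P.cell (a ⊓ b) ω))
      = ∑ ω, ∑ x with b ω x,
          P.p x / P.cell c x * (P.p ω * P.cell a ω / P.cell (a ⊓ b) ω) := by
        refine Finset.sum_congr rfl fun ω _ => ?_
        calc P.p ω * (P.cell a ω * P.cell b ω / (P.cell c ω * P.cell (a ⊓ b) ω))
            = P.cell b ω / P.cell c ω * (P.p ω * P.cell a ω / P.cell (a ⊓ b) ω) := by ring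
          _ = _ := by
            rw [cell, Finset.sum_div, Finset.sum_mul]
            refine Finset.sum_congr rfl fun x hx => ?_
            rw [P.cell_congr c (hb (Finset.mem_filter_univ x |>.1 hx))]
    _ = ∑ x, P.p x / P.cell c x *
          ∑ ω with b x ω, P.p ω * P.cell a ω / P.cell (a ⊓ b) ω := by
        simp_rw [Finset.mul_sum]
        refine Finset.sum_comm' fun ω x => ?_
        simp [b.comm']
    _ ≤ ∑ x, P.p x / P.cell c x * P.cell c x := by
        gcongr with x
        · exact div_nonneg (P.nonneg x) (P.cell_nonneg c x)
        · exact P.sum_cell_div_cell_inf_le ha hb x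
    _ ≤ ∑ x, P.p x := Finset.sum_le_sum fun x _ => by
        rw [div_mul_comm]
        exact mul_le_of_le_one_left (P.nonneg x) (div_self_le_one _)
    _ = 1 := P.sum_one

theorem ent_anti : Antitone P.ent := fun s t hst => by
  refine neg_le_neg (Finset.sum_le_sum fun ω _ => ?_)
  rcases (P.nonneg ω).eq_or_lt with hω | hω
  · simp [← hω]
  · exact mul_le_mul_of_nonneg_left
      (Real.logb_le_logb_of_le one_lt_two (P.cell_pos s hω) (P.cell_mono hst ω)) hω.le

theorem ent_submodular {a b c : Setoid P.Ω} (ha : a ≤ c) (hb : b ≤ c) :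
    P.ent (a ⊓ b) + P.ent c ≤ P.ent a + P.ent b := by
  let ratio (ω : P.Ω) : ℝ := P.cell a ω * P.cell b ω / (P.cell c ω * P.cell (a ⊓ b) ω)
  have hlog2 : 0 < Real.log 2 := Real.log_pos one_lt_two
  have hratio (ω : P.Ω) : P.p ω * (Real.logb 2 (P.cell a ω) + Real.logb 2 (P.cell b ω)
      - Real.logb 2 (P.cell c ω) - Real.logb 2 (P.cell (a ⊓ b) ω)) ≤
      (P.p ω * ratio ω - P.p ω) / Real.log 2 := by
    rcases (P.nonneg ω).eq_or_lt with hω | hω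
    · simp [← hω]
    have hpos (s : Setoid P.Ω) : 0 < P.cell s ω := P.cell_pos s hω
    have hlogb : Real.logb 2 (P.cell a ω) + Real.logb 2 (P.cell b ω) - Real.logb 2 (P.cell c ω)
        - Real.logb 2 (P.cell (a ⊓ b) ω) = Real.logb 2 (ratio ω) := by
      rw [Real.logb_div (mul_pos (hpos a) (hpos b)).ne' (mul_pos (hpos c) (hpos _)).ne',
        Real.logb_mul (hpos a).ne' (hpos b).ne', Real.logb_mul (hpos c).ne' (hpos _).ne']
      ring
    have hlog : Real.log (ratio ω) ≤ ratio ω - 1 := Real.log_le_sub_one_of_pos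
      (div_pos (mul_pos (hpos a) (hpos b)) (mul_pos (hpos c) (hpos _)))
    rw [hlogb, Real.logb, ← mul_sub_one, mul_div_assoc]
    gcongr
  have hneg : ∑ ω, (P.p ω * ratio ω - P.p ω) / Real.log 2 ≤ 0 := by
    rw [← Finset.sum_div, Finset.sum_sub_distrib, P.sum_one]
    exact div_nonpos_of_nonpos_of_nonneg
      (sub_nonpos.2 (P.sum_cell_mul_cell_div_le_one ha hb)) hlog2.le
  have hsum := (Finset.sum_le_sum fun ω _ => hratio ω).trans hneg
  simp only [mul_sub, mul_add, Finset.sum_sub_distrib, Finset.sum_add_distrib] at hsum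
  unfold ent
  linarith

theorem isPolymatroidal_ent : IsPolymatroidal P.ent where
  antitone := P.ent_anti
  submodular _ _ _ := P.ent_submodular
  map_top := by simp [ent, cell_top]

end Entropy

section RandomVariable

variable {P : FinProbSpace} {α β ι V : Type}

theorem ker_tuple [Fintype ι] (X : ι → P.Ω → V) :
    Setoid.ker (P.tuple X) = Finset.univ.inf fun i => Setoid.ker (X i) := by
  refine le_antisymm (Finset.le_inf fun i _ x y hxy => congrFun hxy i) fun x y hxy => ?_
  exact funext fun i => Finset.inf_le (f := fun i => Setoid.ker (X i)) (Finset.mem_univ i) hxy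

variable [DecidableEq α] [DecidableEq V]

theorem cell_ker (X : P.Ω → α) (ω : P.Ω) : P.cell (Setoid.ker X) ω = P.prob X (X ω) := by
  simp [cell, prob, Finset.sum_filter, Setoid.ker_def, eq_comm]

theorem sum_prob_mul [Fintype α] (X : P.Ω → α) (F : α → ℝ) :
    ∑ a, P.prob X a * F a = ∑ ω, P.p ω * F (X ω) := by
  simp_rw [prob, Finset.sum_mul, ite_mul, zero_mul]
  rw [Finset.sum_comm]
  simp

theorem H_eq_ent [Fintype α] (X : P.Ω → α) : P.H X = P.ent (Setoid.ker X) := by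
  simp_rw [H, ent, cell_ker, Finset.sum_neg_distrib]
  rw [sum_prob_mul X fun a => Real.logb 2 (P.prob X a)]

theorem condH_eq_zero_iff_determines [Fintype α] [Fintype β] [DecidableEq β] {X : P.Ω → α}
    {Y : P.Ω → β} :
    P.condH X Y = 0 ↔ Determines P.ent (Setoid.ker Y) (Setoid.ker X) := by
  have hpair : Setoid.ker (fun ω => (X ω, Y ω)) = Setoid.ker X ⊓ Setoid.ker Y :=
    Setoid.ext fun _ _ => Prod.mk_inj
  rw [condH, H_eq_ent, H_eq_ent, hpair, sub_eq_zero, Determines]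

theorem iIndep.ent_inf_ker [Fintype ι] [DecidableEq ι] {X : ι → P.Ω → V} (hX : P.iIndep X) :
    P.ent (Finset.univ.inf fun i => Setoid.ker (X i)) = ∑ i, P.ent (Setoid.ker (X i)) := by
  simp only [← ker_tuple, ent, Finset.sum_neg_distrib, neg_inj]
  rw [Finset.sum_comm]
  refine Finset.sum_congr rfl fun ω _ => ?_
  rcases (P.nonneg ω).eq_or_lt with hω | hω
  · simp [← hω]
  · have hne (i : ι) : P.cell (Setoid.ker (X i)) ω ≠ 0 := (P.cell_pos _ hω).ne'
    rw [← Finset.mul_sum, ← Real.logb_prod _ _ fun i _ => hne i]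
    simp_rw [cell_ker]
    rw [hX]
    rfl

end RandomVariable

end FinProbSpace

theorem sum_inv_pow_pos {K : ℕ} (hK : K ≠ 0) (N : ℕ) :
    0 < ∑ t ∈ Finset.range K, (1 / (N : ℝ)) ^ t := by
  obtain ⟨K, rfl⟩ := Nat.exists_eq_succ_of_ne_zero hK
  rw [Finset.sum_range_succ', pow_zero]
  positivity

namespace IRScheme

variable {K N : ℕ} {Mn : Fin N → ℕ} {Lw Lx : ℝ} (C : IRScheme K N Mn Lw Lx)

/-- The scheme is repudiative when the users request only answers of `G`; for `G = Set.univ` this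
is `IRScheme.IsRIR`. -/
def IsRIROn (G : Set (Σ n, Fin (Mn n))) : Prop :=
  ∀ k, ∀ x ∈ G, ∃ q ∈ C.Q k, q x.1 = x.2 ∧ ∀ n, ⟨n, q n⟩ ∈ G

variable {C}

/-- By privacy the set of answers requested with positive probability is the same for every
message. -/
theorem IsPIR.exists_isRIROn [NeZero N] [NeZero K] (hC : C.IsPIR) :
    ∃ G, G.Nonempty ∧ C.IsRIROn G := by
  obtain ⟨μ, hμ, hsum, hpriv⟩ := hC
  refine ⟨{x | ∃ k, ∃ q ∈ C.Q k, 0 < μ k q ∧ q x.1 = x.2}, ?_, ?_⟩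
  · obtain ⟨q, hq, hpos⟩ : ∃ q ∈ C.Q 0, 0 < μ 0 q :=
      Finset.exists_lt_of_sum_lt (by simp [hsum])
    exact ⟨⟨0, q 0⟩, 0, q, hq, hpos, rfl⟩
  · rintro k ⟨n, m⟩ ⟨k', q', hq', hpos', hqm'⟩
    obtain rfl : q' n = m := hqm'
    have hmarginal : 0 < ∑ q ∈ (C.Q k).filter (fun q => q n = q' n), μ k q := by
      rw [hpriv k k']
      exact hpos'.trans_le (Finset.single_le_sum (fun q _ => hμ k' q) (by simp [hq']))
    obtain ⟨q, hq, hpos⟩ : ∃ q ∈ (C.Q k).filter (fun q => q n = q' n), 0 < μ k q :=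
      Finset.exists_lt_of_sum_lt (by simpa using hmarginal)
    rw [Finset.mem_filter] at hq
    exact ⟨q, hq.1, hq.2, fun l => ⟨k, q, hq.1, hpos, rfl⟩⟩

variable (C) in
/-- The answers of `G` in a scheme whose rate, by `hLx`, is at least `C_K(N)`. -/
def tightSystem (hLw : 0 < Lw)
    (hLx : Lx ≤ Lw / N * ∑ t ∈ Finset.range K, (1 / (N : ℝ)) ^ t)
    {G : Set (Σ n, Fin (Mn n))} (hG : C.IsRIROn G) : TightSystem C.P.ent K N G where
  polymatroidal := C.P.isPolymatroidal_ent
  msg k := Setoid.ker (C.W k)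
  ans x := Setoid.ker (C.A x.1.1 x.1.2)
  db x := x.1.1
  L := Lw
  L_pos := hLw
  map_inf_msg s := by
    rw [C.P.isPolymatroidal_ent.map_inf_eq_sum_of_univ C.indep.ent_inf_ker]
    simp [← FinProbSpace.H_eq_ent, C.HW]
  map_ans_le x := by
    rwa [← FinProbSpace.H_eq_ent, C.HA]
  determines_ans x := by
    obtain ⟨f, hf⟩ := C.ans_fn x.1.1 x.1.2
    rw [← FinProbSpace.ker_tuple]
    refine .of_le fun ω ω' hω => ?_
    rw [Setoid.ker_def, hf, hf]
    exact congrArg f hω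
  exists_decodes k x := by
    obtain ⟨q, hq, hqx, hqG⟩ := hG k x.1 x.2
    refine ⟨fun n => ⟨⟨n, q n⟩, hqG n⟩, fun n => rfl, Subtype.ext (Sigma.ext rfl (heq_of_eq hqx)),
      ?_⟩
    have hdec := FinProbSpace.condH_eq_zero_iff_determines.1 (C.decodes k q hq)
    rwa [FinProbSpace.ker_tuple] at hdec

theorem IsPIR.pow_le [NeZero K] (hC : C.IsPIR) (hLx : 0 < Lx) (hrate : CK N K ≤ Lw / (N * Lx))
    (n : Fin N) : N ^ (K - 1) ≤ Mn n := by
  have : NeZero N := ⟨n.pos.ne'⟩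
  have hN : (0 : ℝ) < N := Nat.cast_pos.2 n.pos
  have hS := sum_inv_pow_pos (NeZero.ne K) N
  rw [CK, le_div_iff₀ (mul_pos hN hLx), inv_mul_le_iff₀ hS] at hrate
  have hLw : 0 < Lw := pos_of_mul_pos_right ((mul_pos hN hLx).trans_le hrate) hS.le
  obtain ⟨G, hGne, hG⟩ := hC.exists_isRIROn
  have := hGne.to_subtype
  have hLx' : Lx ≤ Lw / N * ∑ t ∈ Finset.range K, (1 / (N : ℝ)) ^ t := by
    rwa [div_mul_eq_mul_div, le_div_iff₀' hN, mul_comm Lw]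
  refine ((C.tightSystem hLw hLx' hG).pow_le_card_db n).trans ?_
  let index (x : {x : G // x.1.1 = n}) : Fin (Mn n) := Equiv.sigmaSubtype n ⟨x.1.1, x.2⟩
  have hindex : Function.Injective index := (Equiv.injective _).comp fun x y hxy =>
    Subtype.ext (Subtype.ext (Subtype.mk.inj hxy))
  exact (Nat.card_le_card_of_injective index hindex).trans_eq (Nat.card_fin _)

theorem isPIR_of_card_eq (hQ : ∀ k k', (C.Q k).card = (C.Q k').card)
    (hfilter : ∀ (k k' : Fin K) (n : Fin N) (m : Fin (Mn n)),
      ((C.Q k).filter fun q => q n = m).card = ((C.Q k').filter fun q => q n = m).card) :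
    C.IsPIR := by
  refine ⟨fun k _ => ((C.Q k).card : ℝ)⁻¹, fun _ _ => by positivity, fun k => ?_,
    fun k k' n m => ?_⟩
  · have hne : ((C.Q k).card : ℝ) ≠ 0 := Nat.cast_ne_zero.2 (C.Q_nonempty k).card_ne_zero
    simp [hne]
  · simp [hQ k k', hfilter k k' n m]

end IRScheme

namespace FinProbSpace

/-- The uniform distribution on a finite type. -/
abbrev uniform (Ω : Type) [Fintype Ω] [Nonempty Ω] : FinProbSpace where
  Ω := Ω
  p _ := (Fintype.card Ω : ℝ)⁻¹
  nonneg _ := by positivity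
  sum_one := by simp

variable {Ω B : Type} [Fintype Ω] [Nonempty Ω] [Fintype B] [DecidableEq B]

theorem prob_uniform_of_card_fiber_eq {X : Ω → B}
    (hX : ∀ b b', (Finset.univ.filter fun ω => X ω = b).card =
      (Finset.univ.filter fun ω => X ω = b').card) (b : B) :
    (uniform Ω).prob X b = (Fintype.card B : ℝ)⁻¹ := by
  have hfiber (b' : B) : (uniform Ω).prob X b' = (uniform Ω).prob X b := by
    simp only [prob, ← Finset.sum_filter, Finset.sum_const, hX b' b]
  have htotal := (uniform Ω).sum_prob_mul X fun _ => 1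
  simp only [mul_one, hfiber, (uniform Ω).sum_one, Finset.sum_const, Finset.card_univ,
    nsmul_eq_mul] at htotal
  exact eq_inv_of_mul_eq_one_right htotal

theorem H_uniform_of_card_fiber_eq {X : Ω → B}
    (hX : ∀ b b', (Finset.univ.filter fun ω => X ω = b).card =
      (Finset.univ.filter fun ω => X ω = b').card) :
    (uniform Ω).H X = Real.logb 2 (Fintype.card B) := by
  have : Nonempty B := ‹Nonempty Ω›.map X
  simp only [H, prob_uniform_of_card_fiber_eq hX, Real.logb_inv, mul_neg, neg_neg,
    Finset.sum_const, Finset.card_univ, nsmul_eq_mul]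
  rw [mul_inv_cancel_left₀ (Nat.cast_ne_zero.2 Fintype.card_ne_zero)]

variable {ι : Type} [Fintype ι] [DecidableEq ι]

theorem card_fiber_eval_eq (i : ι) (b b' : B) :
    (Finset.univ.filter fun ω : ι → B => ω i = b).card =
      (Finset.univ.filter fun ω : ι → B => ω i = b').card := by
  rw [← Fintype.piFinset_univ,
    Fintype.card_filter_piFinset_const_eq_of_mem _ i (Finset.mem_univ b),
    Fintype.card_filter_piFinset_const_eq_of_mem _ i (Finset.mem_univ b')]

theorem iIndep_uniform_eval [Nonempty B] : (uniform (ι → B)).iIndep fun i ω => ω i := by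
  intro a
  have hjoint : (uniform (ι → B)).prob id a = (Fintype.card (ι → B) : ℝ)⁻¹ :=
    prob_uniform_of_card_fiber_eq (by simp [Finset.filter_eq']) a
  have hcoord (i : ι) : (uniform (ι → B)).prob (fun ω => ω i) (a i) = (Fintype.card B : ℝ)⁻¹ :=
    prob_uniform_of_card_fiber_eq (card_fiber_eval_eq i) (a i)
  rw [Finset.prod_congr rfl fun i _ => hcoord i]
  refine hjoint.trans ?_
  rw [Finset.prod_const, Finset.card_univ, Fintype.card_fun, Nat.cast_pow, inv_pow]

end FinProbSpace

namespace ShiftedCode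

section Code

/-- A message of the shifted code: for each shift `c` a block of `|G| - 1` bits. -/
abbrev Msg (ι G : Type) [Zero G] : Type := (ι → G) → {j : G // j ≠ 0} → ZMod 2

variable {ι G : Type} [DecidableEq G]

/-- The bits of block `c`, extended by a zero in position `0`. -/
def bit [Zero G] (w : Msg ι G) (c : ι → G) (j : G) : ZMod 2 :=
  if h : j ≠ 0 then w c ⟨j, h⟩ else 0

@[simp]
theorem bit_zero [Zero G] (w : Msg ι G) (c : ι → G) : bit w c 0 = 0 := by simp [bit]

theorem bit_add [Zero G] (w w' : Msg ι G) (c : ι → G) (j : G) :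
    bit (w + w') c j = bit w c j + bit w' c j := by
  unfold bit
  split_ifs <;> simp

variable [AddCommGroup G] [Fintype ι]

/-- The answer with index `a`: in block `c`, the sum of the bits in positions `a l + c l`. -/
def answer (a : ι → G) : (ι → Msg ι G) →+ ((ι → G) → ZMod 2) :=
  AddMonoidHom.mk' (fun ω c => ∑ l, bit (ω l) c (a l + c l)) fun ω ω' => by
    ext c
    simp [bit_add, Finset.sum_add_distrib]

theorem answer_apply (a : ι → G) (ω : ι → Msg ι G) (c : ι → G) :
    answer a ω c = ∑ l, bit (ω l) c (a l + c l) := rfl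

theorem answer_neg_self (a : ι → G) (ω : ι → Msg ι G) : answer a ω (-a) = 0 := by
  simp [answer_apply]

/-- The answer with index `a` without the block in which it vanishes. -/
def reducedAnswer (a : ι → G) : (ι → Msg ι G) →+ ({c : ι → G // c ≠ -a} → ZMod 2) :=
  AddMonoidHom.mk' (fun ω c => answer a ω c.1) fun ω ω' => by
    ext c
    simp

theorem ker_answer (a : ι → G) : Setoid.ker (answer a) = Setoid.ker (reducedAnswer a) := by
  ext ω ω'
  simp only [Setoid.ker_def]
  refine ⟨fun h => funext fun c => congrFun h c.1, fun h => funext fun c => ?_⟩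
  by_cases hc : c = -a
  · rw [hc, answer_neg_self, answer_neg_self]
  · exact congrFun h ⟨c, hc⟩

theorem reducedAnswer_surjective (a : ι → G) : Function.Surjective (reducedAnswer a) := by
  classical
  intro g
  have hex (c : {c : ι → G // c ≠ -a}) : ∃ l, a l + c.1 l ≠ 0 := by
    by_contra! h
    exact c.2 (eq_neg_of_add_eq_zero_right (funext h))
  choose l hl using hex
  refine ⟨fun k c _ => if h : c ≠ -a then (if k = l ⟨c, h⟩ then g ⟨c, h⟩ else 0) else 0, ?_⟩
  ext c
  change answer a _ c.1 = _
  rw [answer_apply, Finset.sum_eq_single (l c)]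
  · simp [bit, hl, c.2]
  · intro k _ hk
    simp [bit, c.2, hk]
  · simp

variable [DecidableEq ι]

/-- The answers indexed by a line in direction `k` determine the message `k`: in each block one
answer of the line omits that message, and the others add one of its bits to the same sum. -/
theorem eq_of_answer_line_eq (k : ι) (e : ι → G) {ω ω' : ι → Msg ι G}
    (hline : ∀ n, answer (e + Pi.single k n) ω = answer (e + Pi.single k n) ω') : ω k = ω' k := by
  have hsplit (ω : ι → Msg ι G) (c : ι → G) (j : G) :
      answer (e + Pi.single k (j - e k - c k)) ω c =
        bit (ω k) c j + ∑ l ∈ Finset.univ.erase k, bit (ω l) c (e l + c l) := by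
    rw [answer_apply, ← Finset.add_sum_erase _ _ (Finset.mem_univ k)]
    congr 1
    · rw [Pi.add_apply, Pi.single_eq_same, add_assoc, sub_add_cancel, add_sub_cancel]
    · refine Finset.sum_congr rfl fun l hl => ?_
      simp [Finset.ne_of_mem_erase hl]
  ext c ⟨j, hj⟩
  have hzero := congrFun (hline (0 - e k - c k)) c
  have hbit := congrFun (hline (j - e k - c k)) c
  rw [hsplit, hsplit, bit_zero, bit_zero, zero_add, zero_add] at hzero
  rw [hsplit, hsplit, hzero] at hbit
  simpa [bit, hj] using add_right_cancel hbit

variable [Fintype G]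

theorem H_answer (a : ι → G) : (FinProbSpace.uniform (ι → Msg ι G)).H (answer a) =
    (Fintype.card G : ℝ) ^ Fintype.card ι - 1 := by
  rw [FinProbSpace.H_eq_ent, ker_answer, ← FinProbSpace.H_eq_ent,
    FinProbSpace.H_uniform_of_card_fiber_eq fun b b' => AddMonoidHom.card_fiber_eq_of_mem_range _
      (reducedAnswer_surjective a b) (reducedAnswer_surjective a b')]
  have hpos : 1 ≤ Fintype.card G ^ Fintype.card ι := Nat.one_le_pow _ _ Fintype.card_pos
  simp [Fintype.card_subtype_compl, Real.logb_pow, hpos]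

theorem H_msg (k : ι) : (FinProbSpace.uniform (ι → Msg ι G)).H (fun ω => ω k) =
    ((Fintype.card G : ℝ) - 1) * Fintype.card G ^ Fintype.card ι := by
  rw [FinProbSpace.H_uniform_of_card_fiber_eq (FinProbSpace.card_fiber_eval_eq k)]
  have hpos : 1 ≤ Fintype.card G := Fintype.card_pos
  simp [Fintype.card_subtype_compl, Real.logb_pow, hpos, mul_comm]

end Code

section Query

variable {G : Type} [AddCommGroup G] {K : ℕ}

/-- The index of the answer of database `n` to the query `b`; its coordinates sum to `n`. -/
def point (n : G) (b : Fin K → G) : Fin (K + 1) → G := Fin.cons (n - ∑ j, b j) b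

theorem sum_point (n : G) (b : Fin K → G) : ∑ i, point n b i = n := by
  simp [point, Fin.sum_univ_succ]

theorem point_tail (p : Fin (K + 1) → G) : point (∑ i, p i) (Fin.tail p) = p := by
  rw [point, Fin.sum_univ_succ]
  simp [Fin.tail]

/-- The query sent to database `n` to retrieve message `k` with randomness `b`. -/
def query (k : Fin (K + 1)) (b : Fin K → G) (n : G) : Fin K → G :=
  b + Fin.tail (Pi.single k n : Fin (K + 1) → G)

theorem point_query (k : Fin (K + 1)) (b : Fin K → G) (n : G) :
    point n (query k b n) = point 0 b + Pi.single k n := by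
  have hsum : ∑ i, (point 0 b + Pi.single k n : Fin (K + 1) → G) i = n := by
    simp [Finset.sum_add_distrib, sum_point]
  have htail := point_tail (point 0 b + Pi.single k n)
  rwa [hsum] at htail

theorem query_bijective (k : Fin (K + 1)) (n : G) :
    Function.Bijective fun b : Fin K → G => query k b n :=
  (Equiv.addRight (Fin.tail (Pi.single k n : Fin (K + 1) → G))).bijective

end Query

section Scheme

variable {K N : ℕ} [NeZero N]

/-- The decoding sets of message `k`, queries being numbered by `finFunctionFinEquiv`. -/
def decodingSets (N : ℕ) [NeZero N] (k : Fin (K + 1)) : Finset (Fin N → Fin (N ^ K)) :=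
  Finset.univ.image fun b n => finFunctionFinEquiv (query k b n)

theorem card_decodingSets (k : Fin (K + 1)) : (decodingSets N k).card = N ^ K := by
  rw [decodingSets, Finset.card_image_of_injective]
  · simp
  · intro b b' h
    exact (query_bijective k 0).1 (finFunctionFinEquiv.injective (congrFun h 0))

theorem card_filter_decodingSets (k : Fin (K + 1)) (n : Fin N) (m : Fin (N ^ K)) :
    ((decodingSets N k).filter fun q => q n = m).card = 1 := by
  obtain ⟨b, hb⟩ := (query_bijective k n).2 (finFunctionFinEquiv.symm m)
  have hiff (b' : Fin K → Fin N) : finFunctionFinEquiv (query k b' n) = m ↔ b' = b := by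
    rw [← Equiv.eq_symm_apply, ← hb, (query_bijective k n).1.eq_iff]
  simp [decodingSets, Finset.filter_image, hiff, Finset.filter_eq']

/-- A capacity achieving scheme with `N ^ K` answers per database for `K + 1` messages. -/
def scheme (K N : ℕ) [NeZero N] : IRScheme (K + 1) N (fun _ => N ^ K)
    (((N : ℝ) - 1) * N ^ (K + 1)) ((N : ℝ) ^ (K + 1) - 1) where
  P := FinProbSpace.uniform (Fin (K + 1) → Msg (Fin (K + 1)) (Fin N))
  V := Msg (Fin (K + 1)) (Fin N)
  V' := (Fin (K + 1) → Fin N) → ZMod 2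
  W k ω := ω k
  A n m := answer (point n (finFunctionFinEquiv.symm m))
  indep := FinProbSpace.iIndep_uniform_eval
  HW k := by simpa using H_msg (G := Fin N) k
  ans_fn n m := ⟨answer (point n (finFunctionFinEquiv.symm m)), fun _ => rfl⟩
  HA n m := by simpa using H_answer (point n (finFunctionFinEquiv.symm m))
  Q := decodingSets N
  Q_nonempty k := Finset.univ_nonempty.image _
  decodes k q hq := by
    obtain ⟨b, -, rfl⟩ := Finset.mem_image.1 hq
    apply FinProbSpace.condH_eq_zero_iff_determines.2
    refine .of_le fun ω ω' h => ?_
    refine eq_of_answer_line_eq k (point 0 b) fun n => ?_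
    rw [← point_query]
    simpa [FinProbSpace.tuple] using congrFun h n

theorem isPIR_scheme : (scheme K N).IsPIR :=
  IRScheme.isPIR_of_card_eq (fun k k' => (card_decodingSets k).trans (card_decodingSets k').symm)
    fun k k' n m =>
      (card_filter_decodingSets k n m).trans (card_filter_decodingSets k' n m).symm

end Scheme

end ShiftedCode

theorem rate_eq_CK (K : ℕ) {N : ℕ} (hN : 1 < N) :
    (((N : ℝ) - 1) * N ^ K) / (N * ((N : ℝ) ^ K - 1)) = CK N K := by
  have hN1 : (1 : ℝ) < N := Nat.one_lt_cast.2 hN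
  have hN0 : (N : ℝ) ≠ 0 := (one_pos.trans hN1).ne'
  have hgeom : (∑ t ∈ Finset.range K, (1 / (N : ℝ)) ^ t) =
      N * (N ^ K - 1) / ((N - 1) * N ^ K) := by
    have hinv : (N : ℝ)⁻¹ - 1 ≠ 0 := sub_ne_zero.2 (inv_ne_one.2 hN1.ne')
    rw [one_div, geom_sum_eq (inv_ne_one.2 hN1.ne'), inv_pow, div_eq_div_iff hinv (by positivity)]
    field_simp
    ring
  rw [CK, hgeom, inv_div]

theorem pir_min_upload_general (K N : ℕ) (hK : 1 ≤ K) (hN : 2 ≤ N) :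
    (∀ (Mn : Fin N → ℕ) (Lw Lx : ℝ), 0 < Lx → ∀ C : IRScheme K N Mn Lw Lx, C.IsPIR →
      CK N K ≤ Lw / (N * Lx) → ∀ n : Fin N, N ^ (K - 1) ≤ Mn n) ∧
    (∃ (Lw Lx : ℝ), 0 < Lw ∧ 0 < Lx ∧
      ∃ C : IRScheme K N (fun _ => N ^ (K - 1)) Lw Lx,
        C.IsPIR ∧ Lw / (N * Lx) = CK N K ∧
        (∀ k : Fin K, (C.Q k).card = N ^ (K - 1)) ∧
        (∀ (k k' : Fin K) (n : Fin N) (m : Fin (N ^ (K - 1))),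
          ((C.Q k).filter (fun q => q n = m)).card =
            ((C.Q k').filter (fun q => q n = m)).card)) := by
  obtain ⟨K, rfl⟩ := Nat.exists_eq_add_of_le' hK
  have : NeZero N := ⟨by omega⟩
  have hN1 : (1 : ℝ) < N := Nat.one_lt_cast.2 hN
  have hans : 0 < (N : ℝ) ^ (K + 1) - 1 := sub_pos.2 (one_lt_pow₀ hN1 K.succ_ne_zero)
  have hmsg : 0 < ((N : ℝ) - 1) * N ^ (K + 1) := mul_pos (sub_pos.2 hN1) (by positivity)
  exact ⟨fun _ _ _ hLx _ hC hrate n => hC.pow_le hLx hrate n,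
    _, _, hmsg, hans, ShiftedCode.scheme K N, ShiftedCode.isPIR_scheme,
    rate_eq_CK (K + 1) hN, ShiftedCode.card_decodingSets, fun k k' n m =>
      (ShiftedCode.card_filter_decodingSets k n m).trans
        (ShiftedCode.card_filter_decodingSets k' n m).symm⟩

/-- Minimum upload cost of capacity achieving PIR_max, Corollary 5:
(i) every capacity achieving PIR_max scheme in which every possible answer of every
database belongs to some decoding set has `M_n ≥ N^{K-1}` for every database `n`;
(ii) there is a capacity achieving PIR_max scheme with `M_n = N^{K-1}` for every `n`, in
which the user selects a decoding set of the desired message uniformly at random among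
`N^{K-1}` decoding sets (so the uniform distribution already guarantees privacy). -/
theorem pir_min_upload (K N : ℕ) (hK : 1 ≤ K) (hN : 2 ≤ N) :
    (∀ (Mn : Fin N → ℕ) (Lw Lx : ℝ), 0 < Lw → 0 < Lx →
      ∀ C : IRScheme K N Mn Lw Lx, C.IsPIR →
        (∀ (n : Fin N) (m : Fin (Mn n)), ∃ k, ∃ q ∈ C.Q k, q n = m) →
        Lw / (N * Lx) = CK N K → ∀ n : Fin N, N ^ (K - 1) ≤ Mn n) ∧
    (∃ (Lw Lx : ℝ), 0 < Lw ∧ 0 < Lx ∧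
      ∃ C : IRScheme K N (fun _ => N ^ (K - 1)) Lw Lx,
        C.IsPIR ∧ Lw / (N * Lx) = CK N K ∧
        (∀ k : Fin K, (C.Q k).card = N ^ (K - 1)) ∧
        (∀ (k k' : Fin K) (n : Fin N) (m : Fin (N ^ (K - 1))),
          ((C.Q k).filter (fun q => q n = m)).card =
            ((C.Q k').filter (fun q => q n = m)).card)) := by
  obtain ⟨hlower, hexists⟩ := pir_min_upload_general K N hK hN
  exact ⟨fun Mn Lw Lx _ hLx C hC _ hrate => hlower Mn Lw Lx hLx C hC hrate.ge, hexists⟩
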